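/- arXiv:1201.3773 — 5 statements merged into one kernel-verified Lean document; each statement's English description precedes it below -/
import Mathlib

section
/- Let K be an abelian group, R a commutative K-graded ring without K-homogeneous zero divisors which is factorially K-graded, and K' a subgroup of K. Then for every multiplicative system S consisting of products of K-prime elements such that the localization S^{-1}R is K'-associated, the Veronese subalgebra (S^{-1}R)_{K'} is factorially K'-graded. -/
/-!
The proof works with fractions, reducing every question about the grading `ℬ` of `S⁻¹R` to the
grading `𝒜` of `R`. A nonzero homogeneous element of `R` is a non-zero-divisor, so `R` embeds in
`S⁻¹R`, and a quotient of homogeneous elements of `S⁻¹R` is again homogeneous, of the difference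
of the degrees (`mem_loc_of_mul_mem`). Hence divisibility of elements homogeneous of degree in
`K'` by nonzero such elements is the same in the Veronese subring as in `S⁻¹R`
(`dvdIn_of_dvd`).

A `K`-prime `p` of `R` either becomes a unit in `S⁻¹R` or stays prime for homogeneous elements
(`dvd_or_dvd_loc`). In the second case every associate of `p` that is homogeneous of degree in
`K'` is `K'`-prime in the Veronese subring (`PrimeAssoc.vprime`). Such an associate exists because
`S⁻¹R` is `K'`-associated, and because a nonzero homogeneous element of the Veronese subring
has degree in `K'` (`deg_mem_of_mem_veronese`).

Given `f = r / s`, factoring `r` into `K`-primes of `R` and replacing each factor by a unit or by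
such an associate gives `f = c * q₁ ⋯ qₙ` with `qᵢ` prime in the Veronese subring and `c` a unit.
Comparing degrees, `c` is homogeneous of degree in `K'`, so if `n = 0` then `f` is a unit
there, and otherwise `c` is absorbed into `q₁`.
-/

/-! Definitions for factorially graded rings, following B. Bechtold,
"Factorially graded rings and Cox rings". -/

section Defs

variable {K R : Type*} [CommRing R]

/-- An element is `K`-homogeneous w.r.t. the grading `𝒜` if it lies in some component. -/
def Homog (𝒜 : K → AddSubgroup R) (f : R) : Prop :=
  ∃ w, f ∈ 𝒜 w

/-- `R` has no `K`-homogeneous zero divisors: the product of two nonzero homogeneous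
elements is nonzero. -/
def NoHomogZeroDivisors (𝒜 : K → AddSubgroup R) : Prop :=
  ∀ f g : R, Homog 𝒜 f → Homog 𝒜 g → f ≠ 0 → g ≠ 0 → f * g ≠ 0

/-- A nonzero homogeneous non-unit `f` is `K`-prime if whenever it divides a product of
homogeneous elements, it divides one of the factors. -/
def KPrime (𝒜 : K → AddSubgroup R) (f : R) : Prop :=
  f ≠ 0 ∧ ¬IsUnit f ∧ Homog 𝒜 f ∧
    ∀ g h : R, Homog 𝒜 g → Homog 𝒜 h → f ∣ g * h → f ∣ g ∨ f ∣ h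

/-- A nonzero homogeneous non-unit `f` is `K`-irreducible if in any factorization of `f`
into two homogeneous factors one of the factors is a unit. -/
def KIrreducible (𝒜 : K → AddSubgroup R) (f : R) : Prop :=
  f ≠ 0 ∧ ¬IsUnit f ∧ Homog 𝒜 f ∧
    ∀ g h : R, Homog 𝒜 g → Homog 𝒜 h → f = g * h → IsUnit g ∨ IsUnit h

/-- `R` is factorially `K`-graded: every nonzero homogeneous non-unit is a product of
`K`-prime elements. -/
def FactoriallyGraded (𝒜 : K → AddSubgroup R) : Prop :=
  ∀ f : R, Homog 𝒜 f → f ≠ 0 → ¬IsUnit f →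
    ∃ l : Multiset R, (∀ p ∈ l, KPrime 𝒜 p) ∧ l.prod = f

/-- `R` is `K`-noetherian: every ideal generated by homogeneous elements is generated by
finitely many homogeneous elements. -/
def KNoetherian (𝒜 : K → AddSubgroup R) : Prop :=
  ∀ s : Set R, (∀ x ∈ s, Homog 𝒜 x) →
    ∃ t : Finset R, (∀ x ∈ t, Homog 𝒜 x) ∧ Ideal.span (t : Set R) = Ideal.span s

end Defs

section Graded

variable {K R : Type*} [AddCommGroup K] [CommRing R]

/-- The Veronese subalgebra `R_{K'} = ⊕_{w ∈ K'} R_w` (as an additive subgroup of `R`). -/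
def Veronese (𝒜 : K → AddSubgroup R) (K' : AddSubgroup K) : AddSubgroup R :=
  ⨆ w ∈ K', 𝒜 w

/-- Homogeneous of some degree belonging to the subgroup `K'`. -/
def VHomog (𝒜 : K → AddSubgroup R) (K' : AddSubgroup K) (f : R) : Prop :=
  ∃ w ∈ K', f ∈ 𝒜 w

/-- Divisibility within a subset `V` of `R` (e.g. within a Veronese subring). -/
def DvdIn (V : Set R) (f g : R) : Prop :=
  ∃ c ∈ V, g = f * c

/-- Being a unit within a subset `V` of `R` (e.g. within a Veronese subring). -/
def IsUnitIn (V : Set R) (f : R) : Prop :=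
  ∃ c ∈ V, f * c = 1

/-- `f` is `K'`-prime in the Veronese subring `R_{K'}` with its `K'`-grading. -/
def VPrime (𝒜 : K → AddSubgroup R) (K' : AddSubgroup K) (f : R) : Prop :=
  f ≠ 0 ∧ ¬IsUnitIn (Veronese 𝒜 K' : Set R) f ∧ VHomog 𝒜 K' f ∧
    ∀ g h : R, VHomog 𝒜 K' g → VHomog 𝒜 K' h →
      DvdIn (Veronese 𝒜 K' : Set R) f (g * h) →
        DvdIn (Veronese 𝒜 K' : Set R) f g ∨ DvdIn (Veronese 𝒜 K' : Set R) f h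

/-- The Veronese subring `R_{K'}` is factorially `K'`-graded. -/
def VFactorial (𝒜 : K → AddSubgroup R) (K' : AddSubgroup K) : Prop :=
  ∀ f : R, VHomog 𝒜 K' f → f ≠ 0 → ¬IsUnitIn (Veronese 𝒜 K' : Set R) f →
    ∃ l : Multiset R, (∀ p ∈ l, VPrime 𝒜 K' p) ∧ l.prod = f

/-- `R` is `K'`-associated: every homogeneous element of `R` is a homogeneous unit times an
element of the Veronese subalgebra `R_{K'}`. -/
def KAssociated (𝒜 : K → AddSubgroup R) (K' : AddSubgroup K) : Prop :=
  ∀ f : R, Homog 𝒜 f → ∃ u r : R, Homog 𝒜 u ∧ IsUnit u ∧ r ∈ Veronese 𝒜 K' ∧ f = u * r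

/-- `ℬ` is the natural `K`-grading on the localization `R' = S⁻¹R`, i.e.
`(S⁻¹R)_w = { r/s : r ∈ R_{deg s + w} }`. -/
def LocGrading (𝒜 : K → AddSubgroup R) (S : Submonoid R) (R' : Type*) [CommRing R']
    [Algebra R R'] (ℬ : K → AddSubgroup R') : Prop :=
  ∀ (w : K) (x : R'), x ∈ ℬ w ↔
    ∃ (r s : R) (v : K), s ∈ S ∧ s ∈ 𝒜 v ∧ r ∈ 𝒜 (v + w) ∧
      x * algebraMap R R' s = algebraMap R R' r

/-- The `K`-grading on the polynomial ring `R[T]` extending `𝒜`, in which `T` is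
homogeneous of degree `w`: the degree-`d` part is spanned by the monomials `a·Tⁿ`
with `a ∈ R_{d - n·w}`. -/
def polyGrading (𝒜 : K → AddSubgroup R) (w : K) : K → AddSubgroup (Polynomial R) :=
  fun d =>
    { carrier := { f : Polynomial R | ∀ n : ℕ, f.coeff n ∈ 𝒜 (d - n • w) }
      zero_mem' := by
        intro n
        rw [Polynomial.coeff_zero]
        exact zero_mem _
      add_mem' := by
        intro f g hf hg n
        rw [Polynomial.coeff_add]
        exact add_mem (hf n) (hg n)
      neg_mem' := by
        intro f hf n
        rw [Polynomial.coeff_neg]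
        exact neg_mem (hf n) }

/-- The coarsened `K`-grading associated with a `K ⊕ ℤᵐ`-grading (or any grading by a
product group): the component of degree `w ∈ K` is `⊕_v R_{(w,v)}`. -/
def coarsen {V : Type*} (𝒜 : K × V → AddSubgroup R) : K → AddSubgroup R :=
  fun w => ⨆ v : V, 𝒜 (w, v)

end Graded

section Base

variable {K R : Type*} [AddCommGroup K] [DecidableEq K] [CommRing R]
  {𝒜 : K → AddSubgroup R} [GradedRing 𝒜]

/-- Absence of homogeneous zero divisors already makes nonzero homogeneous elements regular
against all elements, as multiplication by them shifts the components. -/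
lemma eq_zero_of_homog_mul (hzd : NoHomogZeroDivisors 𝒜) {f x : R} (hf : Homog 𝒜 f)
    (h0 : f ≠ 0) (h : f * x = 0) : x = 0 := by
  obtain ⟨v, hv⟩ := hf
  classical
  rw [← DirectSum.sum_support_decompose 𝒜 x]
  refine Finset.sum_eq_zero fun i _ => ?_
  by_contra hi
  refine hzd f _ ⟨v, hv⟩ ⟨i, (DirectSum.decompose 𝒜 x i).2⟩ h0 hi ?_
  rw [← DirectSum.coe_decompose_mul_add_of_left_mem 𝒜 hv, h]
  simp

lemma mem_of_homog_mul_mem (hzd : NoHomogZeroDivisors 𝒜) {f x : R} {v w : K} (hv : f ∈ 𝒜 v)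
    (h0 : f ≠ 0) (h : f * x ∈ 𝒜 (v + w)) : x ∈ 𝒜 w := by
  have h1 : f * (x - DirectSum.decompose 𝒜 x w) = 0 := by
    rw [mul_sub, ← DirectSum.coe_decompose_mul_add_of_left_mem 𝒜 hv,
      DirectSum.decompose_of_mem_same 𝒜 h, sub_self]
  rw [sub_eq_zero.1 (eq_zero_of_homog_mul hzd ⟨v, hv⟩ h0 h1)]
  exact (DirectSum.decompose 𝒜 x w).2

lemma homog_ne_zero_of_mem_closure [Nontrivial R] (hzd : NoHomogZeroDivisors 𝒜) {P : Set R}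
    (hP : ∀ p ∈ P, KPrime 𝒜 p) {s : R} (hs : s ∈ Submonoid.closure P) :
    Homog 𝒜 s ∧ s ≠ 0 := by
  induction hs using Submonoid.closure_induction with
  | mem x hx => exact ⟨(hP x hx).2.2.1, (hP x hx).1⟩
  | one => exact ⟨⟨0, SetLike.GradedOne.one_mem⟩, one_ne_zero⟩
  | mul x y _ _ hx hy =>
    obtain ⟨⟨v, hv⟩, hx0⟩ := hx
    obtain ⟨⟨w, hw⟩, hy0⟩ := hy
    exact ⟨⟨v + w, SetLike.GradedMul.mul_mem hv hw⟩, hzd x y ⟨v, hv⟩ ⟨w, hw⟩ hx0 hy0⟩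

end Base

section Loc

variable {K R : Type*} [AddCommGroup K] [CommRing R]
  {𝒜 : K → AddSubgroup R} {S : Submonoid R} {R' : Type*} [CommRing R'] [Algebra R R']
  {ℬ : K → AddSubgroup R'} {K' : AddSubgroup K}

lemma mem_veronese_of_vhomog {x : R'} (h : VHomog ℬ K' x) : x ∈ Veronese ℬ K' := by
  obtain ⟨w, hw, hx⟩ := h
  exact AddSubgroup.mem_iSup_of_mem w (AddSubgroup.mem_iSup_of_mem hw hx)

lemma VHomog.homog {x : R'} (h : VHomog ℬ K' x) : Homog ℬ x := by
  obtain ⟨w, -, hw⟩ := h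
  exact ⟨w, hw⟩

variable [DecidableEq K] [GradedRing 𝒜]

lemma mul_mem_loc (hℬ : LocGrading 𝒜 S R' ℬ) {x y : R'} {v w : K} (hx : x ∈ ℬ v)
    (hy : y ∈ ℬ w) : x * y ∈ ℬ (v + w) := by
  obtain ⟨r, s, d, hs, hsd, hr, h⟩ := (hℬ v x).1 hx
  obtain ⟨r', s', d', hs', hsd', hr', h'⟩ := (hℬ w y).1 hy
  refine (hℬ _ _).2 ⟨r * r', s * s', d + d', mul_mem hs hs',
    SetLike.GradedMul.mul_mem hsd hsd', ?_, ?_⟩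
  · rw [add_add_add_comm]
    exact SetLike.GradedMul.mul_mem hr hr'
  · rw [map_mul, map_mul, ← h, ← h']; ring

lemma algebraMap_mem_loc (hℬ : LocGrading 𝒜 S R' ℬ) {r : R} {w : K} (hr : r ∈ 𝒜 w) :
    algebraMap R R' r ∈ ℬ w :=
  (hℬ _ _).2 ⟨r, 1, 0, one_mem _, SetLike.GradedOne.one_mem, by rwa [zero_add], by simp⟩

lemma one_mem_loc (hℬ : LocGrading 𝒜 S R' ℬ) : (1 : R') ∈ ℬ 0 := by
  simpa using algebraMap_mem_loc hℬ (SetLike.GradedOne.one_mem : (1 : R) ∈ 𝒜 0)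

/-- The system `S` consists of regular elements, since they are nonzero and homogeneous. -/
lemma loc_injective (hzd : NoHomogZeroDivisors 𝒜) [IsLocalization S R']
    (hS : ∀ s ∈ S, Homog 𝒜 s ∧ s ≠ 0) : Function.Injective (algebraMap R R') := by
  refine IsLocalization.injective R' (M := S) fun s hs => ?_
  rw [mem_nonZeroDivisors_iff]
  have h := hS s hs
  exact ⟨fun x hx => eq_zero_of_homog_mul hzd h.1 h.2 hx,
    fun x hx => eq_zero_of_homog_mul hzd h.1 h.2 (by rwa [mul_comm])⟩

/-- Quotients of homogeneous elements of the localization are homogeneous. -/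
lemma mem_loc_of_mul_mem (hzd : NoHomogZeroDivisors 𝒜) [IsLocalization S R']
    (hS : ∀ s ∈ S, Homog 𝒜 s ∧ s ≠ 0) (hℬ : LocGrading 𝒜 S R' ℬ) {f c : R'} {v w : K}
    (hf : f ∈ ℬ v) (h0 : f ≠ 0) (h : f * c ∈ ℬ w) : c ∈ ℬ (w - v) := by
  have inj := loc_injective (R' := R') hzd hS
  obtain ⟨r, s, d, hs, hsd, hr, e⟩ := (hℬ v f).1 hf
  obtain ⟨r', s', d', hs', hsd', hr', e'⟩ := (hℬ w _).1 h
  obtain ⟨⟨a, t⟩, et⟩ := IsLocalization.surj S c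
  simp only at et
  obtain ⟨⟨k, hk⟩, -⟩ := hS t t.2
  have hr0 : r ≠ 0 := by
    rintro rfl
    rw [map_zero] at e
    exact h0 (((IsLocalization.map_units R' (⟨s, hs⟩ : S)).mul_left_eq_zero).1 e)
  refine (hℬ _ _).2 ⟨a, t, k, t.2, hk, ?_, et⟩
  have hrs : r * s' ∈ 𝒜 (d + v + d') := SetLike.GradedMul.mul_mem hr hsd'
  refine mem_of_homog_mul_mem hzd hrs
    (hzd _ _ ⟨_, hr⟩ (hS s' hs').1 hr0 (hS s' hs').2) ?_
  have key : r * s' * a = r' * t * s := by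
    apply inj
    simp only [map_mul]
    rw [← e, ← e', ← et]; ring
  rw [key, show d + v + d' + (k + (w - v)) = d' + w + k + d by abel]
  exact SetLike.GradedMul.mul_mem (SetLike.GradedMul.mul_mem hr' hk) hsd

lemma dvdIn_of_dvd (hzd : NoHomogZeroDivisors 𝒜) [IsLocalization S R']
    (hS : ∀ s ∈ S, Homog 𝒜 s ∧ s ≠ 0) (hℬ : LocGrading 𝒜 S R' ℬ) {f g : R'}
    (hf : VHomog ℬ K' f) (hg : VHomog ℬ K' g) (h0 : f ≠ 0) (h : f ∣ g) :
    DvdIn (Veronese ℬ K' : Set R') f g := by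
  obtain ⟨c, rfl⟩ := h
  obtain ⟨v, hv, hf⟩ := hf
  obtain ⟨w, hw, hg⟩ := hg
  exact ⟨c, mem_veronese_of_vhomog ⟨w - v, sub_mem hw hv,
    mem_loc_of_mul_mem hzd hS hℬ hf h0 hg⟩, rfl⟩

/-- Elements of the Veronese subring are fractions `r / s` where `r` has components only in
the degrees `deg s + w` with `w ∈ K'`. -/
lemma exists_frac_of_mem_veronese (hℬ : LocGrading 𝒜 S R' ℬ) {x : R'}
    (hx : x ∈ Veronese ℬ K') :
    ∃ (r s : R) (d : K), s ∈ S ∧ s ∈ 𝒜 d ∧ x * algebraMap R R' s = algebraMap R R' r ∧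
      ∀ w ∉ K', (DirectSum.decompose 𝒜 r (d + w) : R) = 0 := by
  have hle : Veronese ℬ K' = ⨆ w : K', ℬ w := by
    rw [Veronese, iSup_subtype']
  rw [hle] at hx
  induction hx using AddSubgroup.iSup_induction' with
  | hp i x hx =>
    obtain ⟨r, s, d, hs, hsd, hr, e⟩ := (hℬ _ _).1 hx
    refine ⟨r, s, d, hs, hsd, e, fun w hw => DirectSum.decompose_of_mem_ne 𝒜 hr ?_⟩
    intro h
    rw [← add_left_cancel h] at hw
    exact hw i.2
  | h1 => exact ⟨0, 1, 0, one_mem _, SetLike.GradedOne.one_mem, by simp, by simp⟩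
  | hadd x y _ _ ihx ihy =>
    obtain ⟨r, s, d, hs, hsd, e, hr⟩ := ihx
    obtain ⟨r', s', d', hs', hsd', e', hr'⟩ := ihy
    refine ⟨r * s' + r' * s, s * s', d + d', mul_mem hs hs',
      SetLike.GradedMul.mul_mem hsd hsd', ?_, fun w hw => ?_⟩
    · simp only [map_mul, map_add]
      rw [← e, ← e']; ring
    · have h1 : (DirectSum.decompose 𝒜 (r * s') (d + d' + w) : R) = 0 := by
        rw [show d + d' + w = (d + w) + d' by abel,
          DirectSum.coe_decompose_mul_add_of_right_mem 𝒜 hsd', hr w hw, zero_mul]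
      have h2 : (DirectSum.decompose 𝒜 (r' * s) (d + d' + w) : R) = 0 := by
        rw [show d + d' + w = (d' + w) + d by abel,
          DirectSum.coe_decompose_mul_add_of_right_mem 𝒜 hsd, hr' w hw, zero_mul]
      rw [DirectSum.decompose_add, DirectSum.add_apply, AddSubgroup.coe_add, h1, h2, add_zero]

lemma deg_mem_of_mem_veronese (hzd : NoHomogZeroDivisors 𝒜) [IsLocalization S R']
    (hS : ∀ s ∈ S, Homog 𝒜 s ∧ s ≠ 0) (hℬ : LocGrading 𝒜 S R' ℬ) {x : R'} {w : K}
    (hx : x ∈ Veronese ℬ K') (hw : x ∈ ℬ w) (h0 : x ≠ 0) : w ∈ K' := by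
  by_contra hwK
  obtain ⟨r, s, d, hs, hsd, e, hr⟩ := exists_frac_of_mem_veronese hℬ hx
  obtain ⟨r', s', d', hs', hsd', hr', e'⟩ := (hℬ _ _).1 hw
  have key : r' * s = r * s' := by
    apply loc_injective (R' := R') hzd hS
    simp only [map_mul]
    rw [← e, ← e']; ring
  have h1 : r' * s = 0 := by
    have h2 : r' * s ∈ 𝒜 (d' + w + d) := SetLike.GradedMul.mul_mem hr' hsd
    rw [← DirectSum.decompose_of_mem_same 𝒜 h2, key,
      show d' + w + d = (d + w) + d' by abel,
      DirectSum.coe_decompose_mul_add_of_right_mem 𝒜 hsd', hr w hwK, zero_mul]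
  have h3 : r' = 0 :=
    eq_zero_of_homog_mul hzd (hS s hs).1 (hS s hs).2 (by rwa [mul_comm])
  rw [h3, map_zero] at e'
  have hs'u := IsLocalization.map_units R' (⟨s', hs'⟩ : S)
  rw [hs'u.mul_left_eq_zero] at e'
  contradiction

/-- A `K`-prime of `R` that does not become a unit in the localization stays prime there, for
homogeneous elements. -/
lemma dvd_or_dvd_loc (hzd : NoHomogZeroDivisors 𝒜) [IsLocalization S R']
    (hS : ∀ s ∈ S, Homog 𝒜 s ∧ s ≠ 0) (hℬ : LocGrading 𝒜 S R' ℬ) {p : R}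
    (hp : KPrime 𝒜 p) (hu : ¬IsUnit (algebraMap R R' p)) {g h : R'} (hg : Homog ℬ g)
    (hh : Homog ℬ h) (hd : algebraMap R R' p ∣ g * h) :
    algebraMap R R' p ∣ g ∨ algebraMap R R' p ∣ h := by
  obtain ⟨v, hg⟩ := hg
  obtain ⟨w, hh⟩ := hh
  obtain ⟨c, hc⟩ := hd
  obtain ⟨r, s, d, hs, hsd, hr, e⟩ := (hℬ _ _).1 hg
  obtain ⟨r', s', d', hs', hsd', hr', e'⟩ := (hℬ _ _).1 hh
  obtain ⟨⟨a, t⟩, et⟩ := IsLocalization.surj S c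
  simp only at et
  obtain ⟨⟨k, hk⟩, -⟩ := hS t t.2
  have key : r * r' * t = p * (a * s * s') := by
    apply loc_injective (R' := R') hzd hS
    simp only [map_mul]
    rw [← e, ← e', ← et]
    linear_combination (algebraMap R R' s * algebraMap R R' s' * algebraMap R R' t) * hc
  have descend : ∀ {x : R'} {y z : R}, z ∈ S → x * algebraMap R R' z = algebraMap R R' y →
      p ∣ y → algebraMap R R' p ∣ x := by
    intro x y z hz hxy hpy
    have := map_dvd (algebraMap R R') hpy
    rw [← hxy] at this
    exact ((IsLocalization.map_units R' (⟨z, hz⟩ : S)).dvd_mul_right).1 this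
  rcases hp.2.2.2 (r * r') t ⟨_, SetLike.GradedMul.mul_mem hr hr'⟩ ⟨k, hk⟩
    (Dvd.intro _ key.symm) with h1 | h1
  · rcases hp.2.2.2 r r' ⟨_, hr⟩ ⟨_, hr'⟩ h1 with h2 | h2
    · exact Or.inl (descend hs e h2)
    · exact Or.inr (descend hs' e' h2)
  · exact absurd (isUnit_of_dvd_unit (map_dvd (algebraMap R R') h1)
      (IsLocalization.map_units R' t)) hu

/-- `q` is homogeneous of degree in `K'`, and associated in the localization to a `K`-prime of
`R` that does not become a unit. -/
def PrimeAssoc (𝒜 : K → AddSubgroup R) (ℬ : K → AddSubgroup R') (K' : AddSubgroup K)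
    (q : R') : Prop :=
  VHomog ℬ K' q ∧ ∃ p : R, KPrime 𝒜 p ∧ ¬IsUnit (algebraMap R R' p) ∧
    Associated (algebraMap R R' p) q

lemma PrimeAssoc.vprime (hzd : NoHomogZeroDivisors 𝒜) [IsLocalization S R']
    (hS : ∀ s ∈ S, Homog 𝒜 s ∧ s ≠ 0) (hℬ : LocGrading 𝒜 S R' ℬ) {q : R'}
    (hq : PrimeAssoc 𝒜 ℬ K' q) : VPrime ℬ K' q := by
  obtain ⟨hV, p, hp, hu, ha⟩ := hq
  have hq0 : q ≠ 0 := ha.ne_zero_iff.1 fun h => hp.1 <|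
    loc_injective (R' := R') hzd hS (by rw [h, map_zero])
  refine ⟨hq0, ?_, hV, fun g h hg hh hd => ?_⟩
  · rintro ⟨c, -, hc⟩
    exact hu (ha.isUnit_iff.2 (IsUnit.of_mul_eq_one c hc))
  · obtain ⟨c, -, hc⟩ := hd
    have hdvd : algebraMap R R' p ∣ g * h := ha.dvd_iff_dvd_left.2 (Dvd.intro c hc.symm)
    exact (dvd_or_dvd_loc hzd hS hℬ hp hu hg.homog hh.homog hdvd).imp
      (fun h1 => dvdIn_of_dvd hzd hS hℬ hV hg hq0 (ha.dvd_iff_dvd_left.1 h1))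
      (fun h1 => dvdIn_of_dvd hzd hS hℬ hV hh hq0 (ha.dvd_iff_dvd_left.1 h1))

lemma exists_primeAssoc (hzd : NoHomogZeroDivisors 𝒜) [IsLocalization S R']
    (hS : ∀ s ∈ S, Homog 𝒜 s ∧ s ≠ 0) (hℬ : LocGrading 𝒜 S R' ℬ) (hassoc : KAssociated ℬ K')
    {p : R} (hp : KPrime 𝒜 p) (hu : ¬IsUnit (algebraMap R R' p)) :
    ∃ q, PrimeAssoc 𝒜 ℬ K' q ∧ Associated (algebraMap R R' p) q := by
  obtain ⟨w, hw⟩ := hp.2.2.1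
  have hpw := algebraMap_mem_loc hℬ hw
  obtain ⟨u, r, ⟨v, hv⟩, hunit, hr, e⟩ := hassoc _ ⟨w, hpw⟩
  have hp0 : algebraMap R R' p ≠ 0 := fun h => hp.1 <|
    loc_injective (R' := R') hzd hS (by rw [h, map_zero])
  have hu0 : u ≠ 0 := by rintro rfl; simp [hp0] at e
  have hr0 : r ≠ 0 := by rintro rfl; simp [hp0] at e
  have hrw : r ∈ ℬ (w - v) := mem_loc_of_mul_mem hzd hS hℬ hv hu0 (e ▸ hpw)
  have ha : Associated (algebraMap R R' p) r := by
    rw [e]; exact associated_unit_mul_left r u hunit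
  exact ⟨r, ⟨⟨w - v, deg_mem_of_mem_veronese hzd hS hℬ hr hrw hr0, hrw⟩, p, hp, hu, ha⟩, ha⟩

/-- A product of `K`-primes of `R` is, in the localization, associated to a product of primes
of the Veronese subring. -/
lemma exists_multiset_primeAssoc (hzd : NoHomogZeroDivisors 𝒜) [IsLocalization S R']
    (hS : ∀ s ∈ S, Homog 𝒜 s ∧ s ≠ 0) (hℬ : LocGrading 𝒜 S R' ℬ) (hassoc : KAssociated ℬ K')
    (l : Multiset R) (hl : ∀ p ∈ l, KPrime 𝒜 p) :
    ∃ m : Multiset R', (∀ q ∈ m, PrimeAssoc 𝒜 ℬ K' q) ∧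
      Associated m.prod (algebraMap R R' l.prod) := by
  induction l using Multiset.induction_on with
  | empty => exact ⟨0, by simp, by simp⟩
  | cons p l ih =>
    obtain ⟨m, hm, ha⟩ := ih fun q hq => hl q (Multiset.mem_cons_of_mem hq)
    have hp := hl p (Multiset.mem_cons_self p l)
    rw [Multiset.prod_cons, map_mul]
    by_cases hu : IsUnit (algebraMap R R' p)
    · exact ⟨m, hm, ha.trans (associated_unit_mul_right _ _ hu)⟩
    · obtain ⟨q, hq, hpq⟩ := exists_primeAssoc hzd hS hℬ hassoc hp hu
      refine ⟨q ::ₘ m, ?_, ?_⟩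
      · simpa using ⟨hq, hm⟩
      · rw [Multiset.prod_cons]
        exact hpq.symm.mul_mul ha

lemma vhomog_prod (hℬ : LocGrading 𝒜 S R' ℬ) (m : Multiset R')
    (hm : ∀ q ∈ m, VHomog ℬ K' q) : VHomog ℬ K' m.prod := by
  refine Multiset.prod_induction (VHomog ℬ K') m ?_ ⟨0, zero_mem _, one_mem_loc hℬ⟩ hm
  rintro a b ⟨v, hv, ha⟩ ⟨w, hw, hb⟩
  exact ⟨v + w, add_mem hv hw, mul_mem_loc hℬ ha hb⟩

end Loc

/-- Theorem 1.2, supplement. If `R` is factorially `K`-graded without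
homogeneous zero divisors and `K' ≤ K`, then for every multiplicative system `S` generated
by `K`-prime elements such that the graded localization `S⁻¹R` is `K'`-associated, the
Veronese subalgebra `(S⁻¹R)_{K'}` is factorially `K'`-graded. -/
theorem statement_2 {K R : Type*} [AddCommGroup K] [DecidableEq K] [CommRing R]
    (𝒜 : K → AddSubgroup R) [GradedRing 𝒜]
    (hzd : NoHomogZeroDivisors 𝒜) (hfact : FactoriallyGraded 𝒜)
    (K' : AddSubgroup K)
    (S : Submonoid R) (P : Set R) (hP : ∀ p ∈ P, KPrime 𝒜 p)
    (hSP : S = Submonoid.closure P)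
    (R' : Type*) [CommRing R'] [Algebra R R'] [IsLocalization S R']
    (ℬ : K → AddSubgroup R') (hℬ : LocGrading 𝒜 S R' ℬ)
    (hassoc : KAssociated ℬ K') :
    VFactorial ℬ K' := by
  intro f hf hf0 hfu
  have : Nontrivial R' := ⟨f, 0, hf0⟩
  have : Nontrivial R := (algebraMap R R').domain_nontrivial
  have hS : ∀ s ∈ S, Homog 𝒜 s ∧ s ≠ 0 := fun s hs =>
    homog_ne_zero_of_mem_closure hzd hP (hSP ▸ hs)
  have hfV := hf
  obtain ⟨w, hw, hfw⟩ := hf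
  obtain ⟨r, s, d, hs, hsd, hr, e⟩ := (hℬ _ _).1 hfw
  have hsu := IsLocalization.map_units R' (⟨s, hs⟩ : S)
  have hr0 : r ≠ 0 := by
    rintro rfl
    rw [map_zero] at e
    exact hf0 (hsu.mul_left_eq_zero.1 e)
  have hfr : Associated (algebraMap R R' r) f := by
    rw [← e]; exact associated_mul_unit_left f _ hsu
  -- If `r` is a unit, it is associated to the empty product.
  have hfac : ∃ l : Multiset R, (∀ p ∈ l, KPrime 𝒜 p) ∧
      Associated (algebraMap R R' l.prod) (algebraMap R R' r) := by
    by_cases hru : IsUnit r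
    · exact ⟨0, by simp, by simpa using
        (associated_one_iff_isUnit.2 (hru.map (algebraMap R R'))).symm⟩
    · obtain ⟨l, hl, rfl⟩ := hfact r ⟨_, hr⟩ hr0 hru
      exact ⟨l, hl, Associated.refl _⟩
  obtain ⟨l, hl, hlr⟩ := hfac
  obtain ⟨m, hm, hml⟩ := exists_multiset_primeAssoc hzd hS hℬ hassoc l hl
  obtain ⟨c, hc⟩ := (hml.trans hlr).trans hfr
  have hm0 : m.prod ≠ 0 := fun h => hf0 (by rw [← hc, h, zero_mul])
  obtain ⟨v, hv, hmv⟩ := vhomog_prod hℬ m fun q hq => (hm q hq).1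
  -- The unit `c = f / ∏ m` is homogeneous of degree in `K'`.
  have hcw : (c : R') ∈ ℬ (w - v) :=
    mem_loc_of_mul_mem hzd hS hℬ hmv hm0 (by rw [hc]; exact hfw)
  have hwv : w - v ∈ K' := sub_mem hw hv
  rcases Multiset.empty_or_exists_mem m with rfl | ⟨q, hq⟩
  · refine absurd ?_ hfu
    obtain ⟨b, hb, hb1⟩ := dvdIn_of_dvd hzd hS hℬ hfV
      ⟨0, zero_mem K', one_mem_loc hℬ⟩ hf0 (by
        rw [← hc]; simp)
    exact ⟨b, hb, hb1.symm⟩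
  · obtain ⟨m', rfl⟩ := Multiset.exists_cons_of_mem hq
    refine ⟨(q * c) ::ₘ m', ?_, ?_⟩
    · intro x hx
      rcases Multiset.mem_cons.1 hx with rfl | hx
      · obtain ⟨⟨k, hk, hqk⟩, p, hp, hpu, hpq⟩ := hm q hq
        exact PrimeAssoc.vprime hzd hS hℬ
          ⟨⟨k + (w - v), add_mem hk hwv, mul_mem_loc hℬ hqk hcw⟩, p, hp, hpu,
            hpq.trans ⟨c, rfl⟩⟩
      · exact PrimeAssoc.vprime hzd hS hℬ (hm x (Multiset.mem_cons_of_mem hx))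
    · rw [← hc, Multiset.prod_cons, Multiset.prod_cons]; ring
end

section
/- Let K be an abelian group, R a commutative K-graded ring without K-homogeneous zero divisors, and let the polynomial ring R[T] carry the K-grading extending that of R obtained by assigning to T the degree w ∈ K (so the degree-d part of R[T] is spanned by the monomials a·T^n with a ∈ R_{d − n·w}). Then R is factorially K-graded if and only if R[T] is factorially K-graded. -/
section GaussProof

set_option linter.unusedSectionVars false

open Polynomial

variable {K R : Type*} [AddCommGroup K] [CommRing R] {𝒜 : K → AddSubgroup R} {w : K}

/-! ### Homogeneous elements -/

theorem poly_homog_monomial {a : R} {d : K} (ha : a ∈ 𝒜 d) (k : ℕ) :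
    monomial k a ∈ polyGrading 𝒜 w (d + k • w) := by
  intro n
  rw [coeff_monomial]
  split_ifs with h
  · subst h; simpa using ha
  · exact zero_mem _

theorem poly_homog_C {a : R} (ha : Homog 𝒜 a) : Homog (polyGrading 𝒜 w) (C a) := by
  obtain ⟨d, hd⟩ := ha
  exact ⟨_, by simpa using poly_homog_monomial (w := w) hd 0⟩

theorem homog_coeff {f : R[X]} (hf : Homog (polyGrading 𝒜 w) f) (n : ℕ) :
    Homog 𝒜 (f.coeff n) := by
  obtain ⟨d, hd⟩ := hf
  exact ⟨_, hd n⟩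

variable [DecidableEq K] [GradedRing 𝒜]

theorem homog_mul {f g : R} (hf : Homog 𝒜 f) (hg : Homog 𝒜 g) : Homog 𝒜 (f * g) := by
  obtain ⟨i, hi⟩ := hf
  obtain ⟨j, hj⟩ := hg
  exact ⟨i + j, SetLike.mul_mem_graded hi hj⟩

theorem homog_multiset_prod {l : Multiset R} (hl : ∀ p ∈ l, KPrime 𝒜 p) :
    Homog 𝒜 l.prod := by
  induction l using Multiset.induction with
  | empty => exact ⟨0, by simpa using SetLike.GradedOne.one_mem⟩
  | cons p l ih =>
    rw [Multiset.prod_cons]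
    exact homog_mul (hl p (by simp)).2.2.1 (ih fun q hq => hl q (by simp [hq]))

/-- A nonzero homogeneous element is a nonzerodivisor in all of `R`: the homogeneous components
of a multiple `f * x` are the products of `f` with the components of `x`. -/
theorem homog_regular (hzd : NoHomogZeroDivisors 𝒜) {f x : R} (hf : Homog 𝒜 f) (hf0 : f ≠ 0)
    (h : f * x = 0) : x = 0 := by
  obtain ⟨i, hi⟩ := hf
  have hx : ∀ j, (DirectSum.decompose 𝒜 x j : R) = 0 := by
    intro j
    by_contra hj
    refine hzd f _ ⟨i, hi⟩ ⟨j, (DirectSum.decompose 𝒜 x j).2⟩ hf0 hj ?_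
    rw [← DirectSum.coe_decompose_mul_add_of_left_mem 𝒜 hi, h]
    simp
  classical
  rw [← DirectSum.sum_support_decompose 𝒜 x]
  exact Finset.sum_eq_zero fun j _ => hx j

theorem homog_cancel (hzd : NoHomogZeroDivisors 𝒜) {f x y : R} (hf : Homog 𝒜 f) (hf0 : f ≠ 0)
    (h : f * x = f * y) : x = y :=
  sub_eq_zero.1 (homog_regular hzd hf hf0 (by rw [mul_sub, h, sub_self]))

theorem homog_cofactor (hzd : NoHomogZeroDivisors 𝒜) {f q : R} (hf : Homog 𝒜 f) (hf0 : f ≠ 0)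
    (h : Homog 𝒜 (f * q)) : Homog 𝒜 q := by
  obtain ⟨i, hi⟩ := hf
  obtain ⟨j, hj⟩ := h
  have : q = DirectSum.decompose 𝒜 q (j - i) := by
    refine homog_cancel hzd ⟨i, hi⟩ hf0 ?_
    rw [← DirectSum.coe_decompose_mul_add_of_left_mem 𝒜 hi, add_sub_cancel,
      DirectSum.decompose_of_mem_same 𝒜 hj]
  exact ⟨j - i, this ▸ (DirectSum.decompose 𝒜 q (j - i)).2⟩

theorem KPrime.dvd_multiset_prod {p : R} (hp : KPrime 𝒜 p) {l : Multiset R}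
    (hl : ∀ q ∈ l, KPrime 𝒜 q) (h : p ∣ l.prod) : ∃ q ∈ l, p ∣ q := by
  induction l using Multiset.induction with
  | empty => exact absurd (isUnit_of_dvd_one (by simpa using h)) hp.2.1
  | cons q l ih =>
    rw [Multiset.prod_cons] at h
    have hl' : ∀ q ∈ l, KPrime 𝒜 q := fun q hq => hl q (by simp [hq])
    rcases hp.2.2.2 q l.prod (hl q (by simp)).2.2.1 (homog_multiset_prod hl') h with h | h
    · exact ⟨q, by simp, h⟩
    · obtain ⟨r, hr, hd⟩ := ih hl' h
      exact ⟨r, by simp [hr], hd⟩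

theorem KPrime.associated_of_dvd (hzd : NoHomogZeroDivisors 𝒜) {p q : R} (hp : KPrime 𝒜 p)
    (hq : KPrime 𝒜 q) (h : p ∣ q) : Associated p q := by
  obtain ⟨s, rfl⟩ := h
  have hs : Homog 𝒜 s := homog_cofactor hzd hp.2.2.1 hp.1 hq.2.2.1
  have hs0 : s ≠ 0 := fun h => hq.1 (by rw [h, mul_zero])
  rcases hq.2.2.2 p s hp.2.2.1 hs dvd_rfl with ⟨t, ht⟩ | ⟨t, ht⟩
  · have : 1 = s * t := homog_cancel hzd hp.2.2.1 hp.1 (by rw [mul_one, ← mul_assoc, ← ht])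
    exact ⟨(IsUnit.of_mul_eq_one t this.symm).unit, rfl⟩
  · have : 1 = p * t := homog_cancel hzd hs hs0 (by rw [mul_one]; nth_rw 1 [ht]; ring)
    exact absurd (IsUnit.of_mul_eq_one t this.symm) hp.2.1

theorem poly_homog_mul {f g : R[X]} {d e : K} (hf : f ∈ polyGrading 𝒜 w d)
    (hg : g ∈ polyGrading 𝒜 w e) : f * g ∈ polyGrading 𝒜 w (d + e) := by
  intro n
  rw [coeff_mul]
  refine sum_mem fun x hx => ?_
  have hx' : x.1 + x.2 = n := by simpa using hx
  have : d + e - n • w = (d - x.1 • w) + (e - x.2 • w) := by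
    rw [← hx', add_smul]; abel
  rw [this]
  exact SetLike.mul_mem_graded (hf _) (hg _)

theorem poly_mul {f g : R[X]} (hf : Homog (polyGrading 𝒜 w) f)
    (hg : Homog (polyGrading 𝒜 w) g) : Homog (polyGrading 𝒜 w) (f * g) := by
  obtain ⟨i, hi⟩ := hf
  obtain ⟨j, hj⟩ := hg
  exact ⟨i + j, poly_homog_mul hi hj⟩

theorem lc_mul_ne (hzd : NoHomogZeroDivisors 𝒜) {f g : R[X]}
    (hf : Homog (polyGrading 𝒜 w) f) (hf0 : f ≠ 0) (hg0 : g ≠ 0) :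
    f.leadingCoeff * g.leadingCoeff ≠ 0 := fun h =>
  leadingCoeff_ne_zero.2 hg0
    (homog_regular hzd (homog_coeff hf _) (leadingCoeff_ne_zero.2 hf0) h)

theorem poly_cancel (hzd : NoHomogZeroDivisors 𝒜) {f x y : R[X]}
    (hf : Homog (polyGrading 𝒜 w) f) (hf0 : f ≠ 0) (h : f * x = f * y) : x = y := by
  by_contra hxy
  have h1 := lc_mul_ne hzd hf hf0 (sub_ne_zero.2 hxy)
  have h2 : f * (x - y) = 0 := by rw [mul_sub, h, sub_self]
  rw [← leadingCoeff_mul' h1, h2] at h1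
  simp at h1

/-- The quotient of homogeneous polynomials is homogeneous: replacing `q` by its component of
degree `deg (f * q) - deg f` does not change `f * q`. -/
theorem poly_cofactor (hzd : NoHomogZeroDivisors 𝒜) {f q : R[X]}
    (hf : Homog (polyGrading 𝒜 w) f) (hf0 : f ≠ 0) (h : Homog (polyGrading 𝒜 w) (f * q)) :
    Homog (polyGrading 𝒜 w) q := by
  obtain ⟨i, hi⟩ := id hf
  obtain ⟨j, hj⟩ := h
  let c : ℕ → R := fun n => DirectSum.decompose 𝒜 (q.coeff n) (j - i - n • w)
  let q' : R[X] := ∑ n ∈ q.support, monomial n (c n)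
  have hq' : ∀ n, q'.coeff n = c n := by
    intro n
    simp only [q', finsetSum_coeff, coeff_monomial]
    rw [Finset.sum_ite_eq']
    split_ifs with hn
    · rfl
    · simp [c, notMem_support_iff.1 hn]
  have : q = q' := by
    refine poly_cancel hzd hf hf0 ?_
    ext n
    rw [← DirectSum.decompose_of_mem_same 𝒜 (hj n), coeff_mul, coeff_mul,
      DirectSum.decompose_sum, DFinsupp.finsetSum_apply, AddSubgroup.val_finsetSum]
    refine Finset.sum_congr rfl fun x hx => ?_
    have hx' : x.1 + x.2 = n := by simpa using hx
    have e : j - n • w = (i - x.1 • w) + (j - i - x.2 • w) := by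
      rw [← hx', add_smul]; abel
    rw [hq', e, DirectSum.coe_decompose_mul_add_of_left_mem 𝒜 (hi _)]
  refine ⟨j - i, fun n => ?_⟩
  rw [this, hq']
  exact (DirectSum.decompose 𝒜 (q.coeff n) (j - i - n • w)).2

/-! ### Primitive polynomials and content -/

/-- Gauss's lemma: a `K`-prime of `R` stays `K`-prime in `R[T]`. If `p` divides neither `g` nor
`h`, consider the first coefficients `gᵢ`, `hⱼ` not divisible by `p`; in the coefficient of
`g * h` at `i + j` every term but `gᵢ * hⱼ` is divisible by `p`. -/
theorem kprime_C {p : R} (hp : KPrime 𝒜 p) : KPrime (polyGrading 𝒜 w) (C p) := by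
  classical
  refine ⟨C_ne_zero.2 hp.1, fun h => hp.2.1 (isUnit_C.1 h), poly_homog_C hp.2.2.1, ?_⟩
  intro g h hg hh hdvd
  by_contra! hcon
  rw [C_dvd_iff_dvd_coeff, C_dvd_iff_dvd_coeff] at hcon
  obtain ⟨h1, h2⟩ := hcon
  push Not at h1 h2
  have hi := Nat.find_spec h1
  have hj := Nat.find_spec h2
  have hi' := fun m => Nat.find_min (m := m) h1
  have hj' := fun m => Nat.find_min (m := m) h2
  generalize Nat.find h1 = i at *
  generalize Nat.find h2 = j at *
  have key := (C_dvd_iff_dvd_coeff _ _).1 hdvd (i + j)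
  rw [coeff_mul, ← Finset.add_sum_erase _ _ (a := (i, j)) (by simp)] at key
  have rest : p ∣ ∑ x ∈ (Finset.HasAntidiagonal.antidiagonal (i + j)).erase (i, j),
      g.coeff x.1 * h.coeff x.2 := by
    refine Finset.dvd_sum fun x hx => ?_
    obtain ⟨a, b⟩ := x
    simp only [Finset.mem_erase, ne_eq, Prod.mk.injEq, Finset.HasAntidiagonal.mem_antidiagonal] at hx
    rcases lt_or_ge a i with ha | ha
    · exact Dvd.dvd.mul_right (not_not.1 (hi' a ha)) _
    · exact Dvd.dvd.mul_left (not_not.1 (hj' b (by omega))) _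
  rcases hp.2.2.2 _ _ (homog_coeff hg i) (homog_coeff hh j)
    ((dvd_add_left rest).1 key) with h | h
  · exact hi h
  · exact hj h

/-- A polynomial over `R` is primitive if it is divisible by no `K`-prime constant. -/
def KPrimitive (𝒜 : K → AddSubgroup R) (f : R[X]) : Prop :=
  ∀ p, KPrime 𝒜 p → ¬ C p ∣ f

/-- Induction on the number `n` of `K`-primes in a product that the leading coefficient divides:
splitting a `K`-prime off the polynomial removes an associate of it from that product. -/
theorem exists_primitive_aux (hzd : NoHomogZeroDivisors 𝒜) (n : ℕ) :
    ∀ l : Multiset R, l.card = n → (∀ p ∈ l, KPrime 𝒜 p) →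
    ∀ f : R[X], Homog (polyGrading 𝒜 w) f → f ≠ 0 → f.leadingCoeff ∣ l.prod →
    ∃ m : Multiset R, ∃ g : R[X], (∀ p ∈ m, KPrime 𝒜 p) ∧ Homog (polyGrading 𝒜 w) g ∧
      KPrimitive 𝒜 g ∧ f = C m.prod * g := by
  induction n with
  | zero =>
    intro l hl _ f hf _ hd
    rw [Multiset.card_eq_zero] at hl
    subst hl
    refine ⟨0, f, by simp, hf, fun p hp hpf => hp.2.1 ?_, by simp⟩
    have := (C_dvd_iff_dvd_coeff _ _).1 hpf f.natDegree
    exact isUnit_of_dvd_one (this.trans (by simpa using hd))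
  | succ n ih =>
    intro l hl hlp f hf hf0 hd
    by_cases hprim : KPrimitive 𝒜 f
    · exact ⟨0, f, by simp, hf, hprim, by simp⟩
    unfold KPrimitive at hprim
    push Not at hprim
    obtain ⟨p, hp, hpf⟩ := hprim
    have hpl := (C_dvd_iff_dvd_coeff _ _).1 hpf f.natDegree
    obtain ⟨q, hq, hpq⟩ := hp.dvd_multiset_prod hlp (hpl.trans hd)
    obtain ⟨s, rfl⟩ := hp.associated_of_dvd hzd (hlp q hq) hpq
    obtain ⟨l', rfl⟩ := Multiset.exists_cons_of_mem hq
    obtain ⟨g, rfl⟩ := hpf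
    have hC : C p ≠ 0 := C_ne_zero.2 hp.1
    have hg0 : g ≠ 0 := by rintro rfl; simp at hf0
    have hg := poly_cofactor hzd (poly_homog_C hp.2.2.1) hC hf
    have hne := lc_mul_ne (w := w) hzd (poly_homog_C hp.2.2.1) hC hg0
    rw [leadingCoeff_mul' hne, leadingCoeff_C, Multiset.prod_cons] at hd
    obtain ⟨t, ht⟩ := hd
    have ht' : s * l'.prod = g.leadingCoeff * t :=
      homog_cancel hzd hp.2.2.1 hp.1 (by rw [← mul_assoc, ht, mul_assoc])
    have hd' : g.leadingCoeff ∣ l'.prod :=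
      (s.isUnit.dvd_mul_left).1 ⟨t, ht'⟩
    obtain ⟨m, g', hm, hg', hprim, rfl⟩ := ih l' (by simpa using hl)
      (fun q hq => hlp q (by simp [hq])) g hg hg0 hd'
    refine ⟨p ::ₘ m, g', ?_, hg', hprim, by simp [mul_assoc]⟩
    intro q hq
    rcases Multiset.mem_cons.1 hq with rfl | hq
    · exact hp
    · exact hm q hq

/-- Splitting off the content. It is finite because the leading coefficient has only finitely
many `K`-prime factors. -/
theorem exists_primitive (hzd : NoHomogZeroDivisors 𝒜) (hR : FactoriallyGraded 𝒜) {f : R[X]}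
    (hf : Homog (polyGrading 𝒜 w) f) (hf0 : f ≠ 0) :
    ∃ m : Multiset R, ∃ g : R[X], (∀ p ∈ m, KPrime 𝒜 p) ∧ Homog (polyGrading 𝒜 w) g ∧
      KPrimitive 𝒜 g ∧ f = C m.prod * g := by
  by_cases hu : IsUnit f.leadingCoeff
  · exact exists_primitive_aux hzd 0 0 rfl (by simp) f hf hf0 (by simpa using hu.dvd)
  · obtain ⟨l, hl, hprod⟩ := hR _ (homog_coeff hf _) (leadingCoeff_ne_zero.2 hf0) hu
    exact exists_primitive_aux hzd _ l rfl hl f hf hf0 (by rw [hprod]; rfl)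

theorem const_dvd_aux (hzd : NoHomogZeroDivisors 𝒜) {d : R[X]}
    (hd : Homog (polyGrading 𝒜 w) d) (hprim : KPrimitive 𝒜 d) (l : Multiset R)
    (hl : ∀ p ∈ l, KPrime 𝒜 p) : ∀ q : R[X], Homog (polyGrading 𝒜 w) q →
      C l.prod ∣ d * q → C l.prod ∣ q := by
  induction l using Multiset.induction with
  | empty => intro q _ _; simp
  | cons p l ih =>
    intro q hq h
    rw [Multiset.prod_cons, C_mul] at h ⊢
    have hp := hl p (by simp)
    have hC : C p ≠ 0 := C_ne_zero.2 hp.1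
    rcases (kprime_C hp).2.2.2 d q hd hq (dvd_of_mul_right_dvd h) with h' | ⟨r, rfl⟩
    · exact absurd h' (hprim p hp)
    have hr := poly_cofactor hzd (poly_homog_C hp.2.2.1) hC hq
    obtain ⟨t, ht⟩ := h
    refine mul_dvd_mul_left _ (ih (fun q hq => hl q (by simp [hq])) r hr ⟨t, ?_⟩)
    refine poly_cancel (w := w) hzd (poly_homog_C hp.2.2.1) hC ?_
    rw [← mul_assoc (C p) (C l.prod), ← ht]; ring

/-- A constant dividing `d * q` with `d` primitive divides `q`. -/
theorem const_dvd (hzd : NoHomogZeroDivisors 𝒜) (hR : FactoriallyGraded 𝒜) {d q : R[X]} {a : R}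
    (hd : Homog (polyGrading 𝒜 w) d) (hprim : KPrimitive 𝒜 d) (ha : Homog 𝒜 a) (ha0 : a ≠ 0)
    (hq : Homog (polyGrading 𝒜 w) q) (h : C a ∣ d * q) : C a ∣ q := by
  by_cases hu : IsUnit a
  · exact (isUnit_C.2 hu).dvd
  · obtain ⟨l, hl, rfl⟩ := hR a ha ha0 hu
    exact const_dvd_aux hzd hd hprim l hl q hq h

/-- Clearing constants: a primitive divisor of `C a * f` divides `f`. -/
theorem primitive_dvd (hzd : NoHomogZeroDivisors 𝒜) (hR : FactoriallyGraded 𝒜) {d f : R[X]}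
    {a : R} (hd : Homog (polyGrading 𝒜 w) d) (hd0 : d ≠ 0) (hprim : KPrimitive 𝒜 d)
    (ha : Homog 𝒜 a) (ha0 : a ≠ 0) (hf : Homog (polyGrading 𝒜 w) f) (h : d ∣ C a * f) :
    d ∣ f := by
  obtain ⟨q, hq⟩ := h
  have hqh : Homog (polyGrading 𝒜 w) q :=
    poly_cofactor hzd hd hd0 (hq ▸ poly_mul (poly_homog_C ha) hf)
  obtain ⟨t, rfl⟩ := const_dvd hzd hR hd hprim ha ha0 hqh (hq ▸ dvd_mul_right _ _)
  refine ⟨t, poly_cancel (w := w) hzd (poly_homog_C ha) (C_ne_zero.2 ha0) ?_⟩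
  rw [hq]; ring

/-! ### Primitive irreducible polynomials are prime -/

theorem homog_pow_ne (hzd : NoHomogZeroDivisors 𝒜) {a : R} (ha : Homog 𝒜 a) (ha0 : a ≠ 0)
    (k : ℕ) : Homog 𝒜 (a ^ k) ∧ a ^ k ≠ 0 := by
  induction k with
  | zero =>
    refine ⟨⟨0, by simpa using SetLike.GradedOne.one_mem⟩, fun h => ha0 ?_⟩
    rw [← mul_one a, ← pow_zero a, h, mul_zero]
  | succ k ih =>
    rw [pow_succ]
    exact ⟨homog_mul ih.1 ha, hzd _ _ ih.1 ha ih.2 ha0⟩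

/-- Homogeneous pseudo-division: if `d` has least degree among the nonzero homogeneous members
of the ideal `I`, it divides every homogeneous member of `I` up to a power of its leading
coefficient. -/
theorem pseudo_dvd {I : Ideal R[X]} {d : R[X]}
    (hd : Homog (polyGrading 𝒜 w) d) (hdI : d ∈ I)
    (hmin : ∀ F ∈ I, Homog (polyGrading 𝒜 w) F → F ≠ 0 → d.natDegree ≤ F.natDegree) (n : ℕ) :
    ∀ F ∈ I, Homog (polyGrading 𝒜 w) F → F.degree < n →
      ∃ k : ℕ, d ∣ C (d.leadingCoeff ^ k) * F := by
  induction n with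
  | zero =>
    intro F _ _ h
    have : F = 0 := by
      rw [← degree_eq_bot]
      simpa using h
    exact ⟨0, by simp [this]⟩
  | succ n ih =>
    intro F hFI hF hlt
    by_cases hF0 : F = 0
    · exact ⟨0, by simp [hF0]⟩
    by_cases hn : F.degree < n
    · exact ih F hFI hF hn
    have hle := hmin F hFI hF hF0
    have hFn : F.natDegree = n := by
      rw [degree_eq_natDegree hF0] at hlt hn
      norm_cast at hlt hn
      omega
    rw [hFn] at hle
    -- One step of the division algorithm cancels the leading terms.
    set G := C d.leadingCoeff * F - monomial (n - d.natDegree) F.leadingCoeff * d with hG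
    have hGI : G ∈ I := I.sub_mem (I.mul_mem_left _ hFI) (I.mul_mem_left _ hdI)
    have hGh : Homog (polyGrading 𝒜 w) G := by
      obtain ⟨i, hi⟩ := hd
      obtain ⟨j, hj⟩ := hF
      refine ⟨i - d.natDegree • w + j, sub_mem ?_ ?_⟩
      · have := poly_homog_monomial (w := w) (hi d.natDegree) 0
        rw [zero_smul, add_zero] at this
        exact poly_homog_mul this hj
      · have := poly_homog_mul (poly_homog_monomial (w := w) (hj F.natDegree)
          (n - d.natDegree)) hi
        rw [coeff_natDegree] at this
        convert this using 1
        obtain ⟨k, rfl⟩ := Nat.exists_eq_add_of_le hle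
        rw [hFn, Nat.add_sub_cancel_left, add_smul]
        abel_nf
    have hGlt : G.degree < n := by
      rw [degree_lt_iff_coeff_zero]
      intro m hm
      obtain ⟨k, rfl⟩ := Nat.exists_eq_add_of_le hle
      obtain ⟨r, rfl⟩ := Nat.exists_eq_add_of_le hm
      rw [hG, coeff_sub, coeff_C_mul, Nat.add_sub_cancel_left,
        show d.natDegree + k + r = (d.natDegree + r) + k by ring, coeff_monomial_mul]
      rcases Nat.eq_zero_or_pos r with rfl | hr
      · simp only [add_zero, ← hFn, coeff_natDegree]
        rw [mul_comm, sub_self]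
      · rw [coeff_eq_zero_of_natDegree_lt (p := F) (by omega),
          coeff_eq_zero_of_natDegree_lt (p := d) (by omega)]
        simp
    obtain ⟨k, hk⟩ := ih G hGI hGh hGlt
    refine ⟨k + 1, ?_⟩
    have e : C (d.leadingCoeff ^ (k + 1)) * F = C (d.leadingCoeff ^ k) * G +
        C (d.leadingCoeff ^ k) * monomial (n - d.natDegree) F.leadingCoeff * d := by
      rw [hG, pow_succ, C_mul]; ring
    rw [e]
    exact dvd_add hk (dvd_mul_left _ _)

/-- A primitive `K`-irreducible polynomial is `K`-prime. Given `f ∣ g * h`, the primitive part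
of a homogeneous element of least degree in the ideal `(f, g)` divides both `f` and `g`; it is
associated to `f`, whence `f ∣ g`, or a unit, whence `(f, g)` contains a nonzero constant
and `f ∣ h`. -/
theorem kprime_of_irreducible (hzd : NoHomogZeroDivisors 𝒜) (hR : FactoriallyGraded 𝒜)
    {f : R[X]} (hf : KIrreducible (polyGrading 𝒜 w) f) (hprim : KPrimitive 𝒜 f) :
    KPrime (polyGrading 𝒜 w) f := by
  classical
  obtain ⟨hf0, hfu, hfh, hirr⟩ := hf
  refine ⟨hf0, hfu, hfh, fun g h hg hh hdvd => ?_⟩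
  let I : Ideal R[X] := Ideal.span {f, g}
  have hfI : f ∈ I := Ideal.subset_span (by simp)
  have hgI : g ∈ I := Ideal.subset_span (by simp)
  have hex : ∃ n, ∃ d ∈ I, Homog (polyGrading 𝒜 w) d ∧ d ≠ 0 ∧ d.natDegree = n :=
    ⟨_, f, hfI, hfh, hf0, rfl⟩
  obtain ⟨d, hdI, hd, hd0, hdn⟩ := Nat.find_spec hex
  have hmin : ∀ F ∈ I, Homog (polyGrading 𝒜 w) F → F ≠ 0 → d.natDegree ≤ F.natDegree :=
    fun F hFI hF hF0 => hdn ▸ Nat.find_min' hex ⟨F, hFI, hF, hF0, rfl⟩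
  have hda : Homog 𝒜 d.leadingCoeff := homog_coeff hd _
  have hda0 := leadingCoeff_ne_zero.2 hd0
  have hdiv : ∀ F ∈ I, Homog (polyGrading 𝒜 w) F →
      ∃ a, Homog 𝒜 a ∧ a ≠ 0 ∧ d ∣ C a * F := by
    intro F hFI hF
    obtain ⟨k, hk⟩ := pseudo_dvd hd hdI hmin (F.natDegree + 1) F hFI hF
      (lt_of_le_of_lt degree_le_natDegree (by exact_mod_cast Nat.lt_succ_self _))
    exact ⟨_, (homog_pow_ne hzd hda hda0 k).1, (homog_pow_ne hzd hda hda0 k).2, hk⟩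
  obtain ⟨m, d', hm, hd', hd'prim, hdd'⟩ := exists_primitive hzd hR hd hd0
  have hd'0 : d' ≠ 0 := by rintro rfl; simp [hdd'] at hd0
  have hm0 : m.prod ≠ 0 := by intro h; simp [hdd', h] at hd0
  have hdiv' : ∀ F ∈ I, Homog (polyGrading 𝒜 w) F → d' ∣ F := by
    intro F hFI hF
    obtain ⟨a, ha, ha0, hdvd⟩ := hdiv F hFI hF
    exact primitive_dvd hzd hR hd' hd'0 hd'prim ha ha0 hF
      ((Dvd.intro_left _ hdd'.symm).trans hdvd)
  obtain ⟨q, hq⟩ := hdiv' f hfI hfh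
  have hqh := poly_cofactor hzd hd' hd'0 (hq ▸ hfh)
  rcases hirr d' q hd' hqh hq with hu | hu
  · right
    obtain ⟨v, hv⟩ := hu.exists_right_inv
    have hcI : C m.prod ∈ I := by
      have : C m.prod = v * d := by rw [hdd', mul_left_comm, mul_comm v, hv, mul_one]
      rw [this]
      exact I.mul_mem_left _ hdI
    obtain ⟨x, y, hxy⟩ := Ideal.mem_span_pair.1 hcI
    refine primitive_dvd hzd hR hfh hf0 hprim (homog_multiset_prod hm) hm0 hh ?_
    rw [← hxy, show (x * f + y * g) * h = f * (x * h) + y * (g * h) by ring]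
    exact dvd_add (dvd_mul_right _ _) (Dvd.dvd.mul_left hdvd _)
  · left
    rw [hq, hu.mul_right_dvd]
    exact hdiv' g hgI hg

/-! ### Existence of factorizations -/

theorem primitive_const_isUnit (hR : FactoriallyGraded 𝒜) {f : R[X]}
    (hf : Homog (polyGrading 𝒜 w) f) (hf0 : f ≠ 0) (hprim : KPrimitive 𝒜 f)
    (hdeg : f.natDegree = 0) : IsUnit f := by
  rw [eq_C_of_natDegree_eq_zero hdeg] at hf0 hprim ⊢
  rw [isUnit_C]
  by_contra hu
  have hl0 : f.coeff 0 ≠ 0 := fun h => hf0 (by rw [h, C_0])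
  obtain ⟨l, hl, hprod⟩ := hR _ (homog_coeff hf 0) hl0 hu
  rcases Multiset.empty_or_exists_mem l with rfl | ⟨p, hp⟩
  · rw [Multiset.prod_zero] at hprod
    exact hu (hprod ▸ isUnit_one)
  · exact hprim p (hl p hp) (C_dvd_iff_dvd_coeff _ _ |>.2 fun n => by
      rw [coeff_C]
      split_ifs
      · rw [← hprod]; exact Multiset.dvd_prod hp
      · exact dvd_zero _)

/-- Induction on the degree: in a proper factorization of a primitive polynomial both factors
are primitive non-units, hence nonconstant and of smaller degree. -/
theorem primitive_factor (hzd : NoHomogZeroDivisors 𝒜) (hR : FactoriallyGraded 𝒜) (n : ℕ) :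
    ∀ f : R[X], f.natDegree = n → Homog (polyGrading 𝒜 w) f → f ≠ 0 → KPrimitive 𝒜 f →
      ∃ (l : Multiset R[X]) (u : R[X]), (∀ p ∈ l, KPrime (polyGrading 𝒜 w) p) ∧ IsUnit u ∧
        u * l.prod = f := by
  induction n using Nat.strong_induction_on with
  | _ n ih =>
    intro f hn hf hf0 hprim
    by_cases hu : IsUnit f
    · exact ⟨0, f, by simp, hu, by simp⟩
    by_cases hirr : KIrreducible (polyGrading 𝒜 w) f
    · exact ⟨{f}, 1, by simpa using kprime_of_irreducible hzd hR hirr hprim, isUnit_one,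
        by simp⟩
    have : ∃ g h : R[X], Homog (polyGrading 𝒜 w) g ∧ Homog (polyGrading 𝒜 w) h ∧ f = g * h ∧
        ¬ IsUnit g ∧ ¬ IsUnit h := by
      by_contra! hcon
      refine hirr ⟨hf0, hu, hf, fun g h hg hh e => ?_⟩
      by_contra! hc
      exact hc.2 (hcon g h hg hh e hc.1)
    obtain ⟨g, h, hg, hh, rfl, hgu, hhu⟩ := this
    have hg0 : g ≠ 0 := left_ne_zero_of_mul hf0
    have hh0 : h ≠ 0 := right_ne_zero_of_mul hf0
    have hgp : KPrimitive 𝒜 g := fun p hp hd => hprim p hp (hd.mul_right _)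
    have hhp : KPrimitive 𝒜 h := fun p hp hd => hprim p hp (hd.mul_left _)
    rw [natDegree_mul' (lc_mul_ne hzd hg hg0 hh0)] at hn
    have h1 : g.natDegree ≠ 0 := fun h => hgu (primitive_const_isUnit hR hg hg0 hgp h)
    have h2 : h.natDegree ≠ 0 := fun h' => hhu (primitive_const_isUnit hR hh hh0 hhp h')
    obtain ⟨l, u, hl, hlu, rfl⟩ := ih _ (by omega) g rfl hg hg0 hgp
    obtain ⟨l', u', hl', hlu', rfl⟩ := ih _ (by omega) h rfl hh hh0 hhp
    refine ⟨l + l', u * u', fun p hp => ?_, hlu.mul hlu', by rw [Multiset.prod_add]; ring⟩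
    rcases Multiset.mem_add.1 hp with hp | hp
    · exact hl p hp
    · exact hl' p hp

theorem poly_multiset_prod {l : Multiset R[X]} (hl : ∀ p ∈ l, KPrime (polyGrading 𝒜 w) p) :
    Homog (polyGrading 𝒜 w) l.prod := by
  induction l using Multiset.induction with
  | empty => exact ⟨0, by
      simpa using poly_homog_monomial (w := w) (SetLike.GradedOne.one_mem (A := 𝒜)) 0⟩
  | cons p l ih =>
    rw [Multiset.prod_cons]
    exact poly_mul (hl p (by simp)).2.2.1 (ih fun q hq => hl q (by simp [hq]))

theorem gauss_forward (hzd : NoHomogZeroDivisors 𝒜) (hR : FactoriallyGraded 𝒜) :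
    FactoriallyGraded (polyGrading 𝒜 w) := by
  intro f hf hf0 hfu
  obtain ⟨m, g, hm, hg, hgp, rfl⟩ := exists_primitive hzd hR hf hf0
  obtain ⟨l, u, hl, hu, rfl⟩ := primitive_factor hzd hR _ g rfl hg
    (right_ne_zero_of_mul hf0) hgp
  have hL : ∀ p ∈ m.map C + l, KPrime (polyGrading 𝒜 w) p := by
    intro p hp
    rcases Multiset.mem_add.1 hp with hp | hp
    · obtain ⟨a, ha, rfl⟩ := Multiset.mem_map.1 hp
      exact kprime_C (hm a ha)
    · exact hl p hp
  have hprod : C m.prod * (u * l.prod) = u * (m.map C + l).prod := by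
    rw [Multiset.prod_add, ← map_multiset_prod]; ring
  rw [hprod] at hf hf0 hfu ⊢
  generalize m.map C + l = L at *
  -- The unit `u` is absorbed into one of the prime factors.
  rcases Multiset.empty_or_exists_mem L with rfl | ⟨p, hp⟩
  · exact absurd (by simpa using hu) hfu
  obtain ⟨L', rfl⟩ := Multiset.exists_cons_of_mem hp
  obtain ⟨hp0, hpu, hph, hpp⟩ := hL p hp
  have hL' : ∀ q ∈ L', KPrime (polyGrading 𝒜 w) q := fun q hq => hL q (by simp [hq])
  have huh : Homog (polyGrading 𝒜 w) u := by
    have hLne : (p ::ₘ L').prod ≠ 0 := right_ne_zero_of_mul hf0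
    exact poly_cofactor hzd (poly_multiset_prod hL) hLne (by rwa [mul_comm] at hf)
  refine ⟨(u * p) ::ₘ L', fun q hq => ?_, by simp [mul_assoc]⟩
  rcases Multiset.mem_cons.1 hq with rfl | hq
  · refine ⟨fun h => hp0 ((hu.mul_right_eq_zero).1 h), fun h => hpu (isUnit_of_mul_isUnit_right h),
      poly_mul huh hph, fun g h hg hh hd => ?_⟩
    rw [hu.mul_left_dvd] at hd ⊢
    rw [hu.mul_left_dvd]
    exact hpp g h hg hh hd
  · exact hL' q hq

/-! ### Descent to the coefficient ring -/

theorem kprime_of_C {p : R} (hp : KPrime (polyGrading 𝒜 w) (C p)) : KPrime 𝒜 p := by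
  obtain ⟨h0, hu, hh, hd⟩ := hp
  refine ⟨C_ne_zero.1 h0, fun h => hu (isUnit_C.2 h), by simpa using homog_coeff hh 0, ?_⟩
  have hC : ∀ a : R, C p ∣ C a → p ∣ a := fun a h => by
    simpa using (C_dvd_iff_dvd_coeff _ _).1 h 0
  intro a b ha hb hab
  exact (hd _ _ (poly_homog_C ha) (poly_homog_C hb)
    (by rw [← C_mul]; exact map_dvd C hab)).imp (hC a) (hC b)

/-- Degrees of homogeneous polynomials add up, so all factors of a constant are constants. -/
theorem gauss_backward (hzd : NoHomogZeroDivisors 𝒜)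
    (hP : FactoriallyGraded (polyGrading 𝒜 w)) : FactoriallyGraded 𝒜 := by
  intro f hf hf0 hfu
  obtain ⟨l, hl, hprod⟩ := hP (C f) (poly_homog_C hf) (C_ne_zero.2 hf0)
    (fun h => hfu (isUnit_C.1 h))
  have hconst : ∀ p ∈ l, C (p.coeff 0) = p := by
    intro p hp
    obtain ⟨q, hq⟩ := Multiset.dvd_prod hp
    rw [hprod] at hq
    have hq0 : q ≠ 0 := by rintro rfl; simp [hf0] at hq
    have := natDegree_mul' (lc_mul_ne hzd (hl p hp).2.2.1 (hl p hp).1 hq0)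
    rw [← hq, natDegree_C] at this
    exact (eq_C_of_natDegree_eq_zero (by omega)).symm
  refine ⟨l.map constantCoeff, fun a ha => ?_, ?_⟩
  · obtain ⟨p, hp, rfl⟩ := Multiset.mem_map.1 ha
    refine kprime_of_C (w := w) ?_
    rw [constantCoeff_apply, hconst p hp]
    exact hl p hp
  · rw [← map_multiset_prod, hprod]
    simp

end GaussProof

/-- Theorem 1.3, homogeneous Gauß theorem. Let `R` be `K`-graded without
homogeneous zero divisors and grade `R[T]` by assigning to `T` the degree `w`. Then `R` is
factorially `K`-graded iff `R[T]` is factorially `K`-graded. -/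
theorem statement_3 {K R : Type*} [AddCommGroup K] [DecidableEq K] [CommRing R]
    (𝒜 : K → AddSubgroup R) [GradedRing 𝒜]
    (hzd : NoHomogZeroDivisors 𝒜) (w : K) :
    FactoriallyGraded 𝒜 ↔ FactoriallyGraded (polyGrading 𝒜 w) := by
  exact ⟨gauss_forward hzd, gauss_backward hzd⟩
end

section
/- Let K be an abelian group, R a commutative K-graded ring without K-homogeneous zero divisors, and K' a subgroup of K such that R is K'-associated. Then an element f of the Veronese subalgebra R_{K'} that is homogeneous (of degree in K') is K'-prime in R_{K'} if and only if it is K-prime in R. -/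
/-- A quotient of homogeneous elements may be taken homogeneous, of the difference of the
degrees: replace any cofactor by its component in that degree. -/
theorem exists_homog_cofactor {K R : Type*} [AddCommGroup K] [DecidableEq K] [CommRing R]
    (𝒜 : K → AddSubgroup R) [GradedRing 𝒜] {d e : K} {f g : R}
    (hf : f ∈ 𝒜 d) (hg : g ∈ 𝒜 e) (hfg : f ∣ g) : ∃ c ∈ 𝒜 (e - d), g = f * c := by
  obtain ⟨c, rfl⟩ := hfg
  refine ⟨DirectSum.decompose 𝒜 c (e - d), SetLike.coe_mem _, ?_⟩
  rw [← DirectSum.coe_decompose_mul_add_of_left_mem 𝒜 hf, add_sub_cancel,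
    DirectSum.decompose_of_mem_same 𝒜 hg]

theorem mem_veronese {K R : Type*} [AddCommGroup K] [CommRing R]
    {𝒜 : K → AddSubgroup R} {K' : AddSubgroup K} {w : K} {r : R}
    (hw : w ∈ K') (hr : r ∈ 𝒜 w) : r ∈ Veronese 𝒜 K' :=
  (le_iSup₂_of_le w hw le_rfl : 𝒜 w ≤ ⨆ w ∈ K', 𝒜 w) hr

/-- For elements homogeneous of degree in `K'`, divisibility in `R` and in `R_{K'}` agree. -/
theorem dvdIn_veronese_iff {K R : Type*} [AddCommGroup K] [DecidableEq K] [CommRing R]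
    (𝒜 : K → AddSubgroup R) [GradedRing 𝒜] {K' : AddSubgroup K} {f g : R}
    (hf : VHomog 𝒜 K' f) (hg : VHomog 𝒜 K' g) :
    DvdIn (Veronese 𝒜 K' : Set R) f g ↔ f ∣ g := by
  refine ⟨fun ⟨c, _, hc⟩ => ⟨c, hc⟩, fun h => ?_⟩
  obtain ⟨d, hd, hfd⟩ := hf
  obtain ⟨e, he, hge⟩ := hg
  obtain ⟨c, hc, hgc⟩ := exists_homog_cofactor 𝒜 hfd hge h
  exact ⟨c, mem_veronese (sub_mem he hd) hc, hgc⟩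

theorem isUnitIn_veronese_iff {K R : Type*} [AddCommGroup K] [DecidableEq K] [CommRing R]
    (𝒜 : K → AddSubgroup R) [GradedRing 𝒜] {K' : AddSubgroup K} {f : R}
    (hf : VHomog 𝒜 K' f) : IsUnitIn (Veronese 𝒜 K' : Set R) f ↔ IsUnit f := by
  rw [isUnit_iff_dvd_one,
    ← dvdIn_veronese_iff 𝒜 hf ⟨0, zero_mem _, SetLike.GradedOne.one_mem⟩]
  exact ⟨fun ⟨c, hc, h⟩ => ⟨c, hc, h.symm⟩, fun ⟨c, hc, h⟩ => ⟨c, hc, h.symm⟩⟩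

/-- Components of an element of `R_{K'}` in degrees outside `K'` vanish. -/
theorem decompose_veronese_eq_zero {K R : Type*} [AddCommGroup K] [DecidableEq K] [CommRing R]
    (𝒜 : K → AddSubgroup R) [GradedRing 𝒜] {K' : AddSubgroup K} {w : K} (hw : w ∉ K')
    {r : R} (hr : r ∈ Veronese 𝒜 K') : (DirectSum.decompose 𝒜 r w : R) = 0 := by
  have hle : Veronese 𝒜 K' ≤ (GradedRing.proj 𝒜 w).ker := by
    refine iSup₂_le fun v hv x hx => ?_
    rw [AddMonoidHom.mem_ker, GradedRing.proj_apply]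
    exact DirectSum.decompose_of_mem_ne 𝒜 hx (fun h => hw (h ▸ hv))
  simpa [AddMonoidHom.mem_ker, GradedRing.proj_apply] using hle hr

/-- In a `K'`-associated ring every homogeneous element is a unit multiple of an element
homogeneous of degree in `K'`: the factor in `R_{K'}` is the given element times the inverse
of a homogeneous unit, hence is itself homogeneous. -/
theorem KAssociated.exists_vhomog {K R : Type*} [AddCommGroup K] [DecidableEq K] [CommRing R]
    {𝒜 : K → AddSubgroup R} [GradedRing 𝒜] {K' : AddSubgroup K}
    (hassoc : KAssociated 𝒜 K') {g : R} (hg : Homog 𝒜 g) :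
    ∃ r, VHomog 𝒜 K' r ∧ Associated r g := by
  obtain ⟨u, r, ⟨a, hua⟩, hu, hrV, rfl⟩ := hassoc g hg
  obtain ⟨b, hb⟩ := hg
  obtain ⟨c, hc, hrc⟩ := exists_homog_cofactor 𝒜 hua hb (dvd_mul_right u r)
  obtain rfl : r = c := hu.mul_left_cancel hrc
  refine ⟨r, ?_, hu.unit, mul_comm _ _⟩
  by_cases hK : b - a ∈ K'
  · exact ⟨_, hK, hc⟩
  · have h0 := decompose_veronese_eq_zero 𝒜 hK hrV
    rw [DirectSum.decompose_of_mem_same 𝒜 hc] at h0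
    exact ⟨0, zero_mem _, h0 ▸ zero_mem _⟩

theorem VHomog.mul {K R : Type*} [AddCommGroup K] [DecidableEq K] [CommRing R]
    {𝒜 : K → AddSubgroup R} [GradedRing 𝒜] {K' : AddSubgroup K} {g h : R}
    (hg : VHomog 𝒜 K' g) (hh : VHomog 𝒜 K' h) : VHomog 𝒜 K' (g * h) := by
  obtain ⟨a, ha, hga⟩ := hg
  obtain ⟨b, hb, hhb⟩ := hh
  exact ⟨a + b, add_mem ha hb, SetLike.GradedMul.mul_mem hga hhb⟩

theorem VHomog.homog_s9 {K R : Type*} [AddCommGroup K] [CommRing R]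
    {𝒜 : K → AddSubgroup R} {K' : AddSubgroup K} {g : R}
    (hg : VHomog 𝒜 K' g) : Homog 𝒜 g :=
  let ⟨w, _, hw⟩ := hg
  ⟨w, hw⟩

/-- Lemma 2.4 (i). If `R` is `K`-graded without homogeneous zero divisors
and `K'`-associated for a subgroup `K' ≤ K`, then an element of the Veronese subalgebra
`R_{K'}` which is homogeneous of degree in `K'` is `K'`-prime in `R_{K'}` iff it is
`K`-prime in `R`. -/
theorem statement_9 {K R : Type*} [AddCommGroup K] [DecidableEq K] [CommRing R]
    (𝒜 : K → AddSubgroup R) [GradedRing 𝒜]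
    (hzd : NoHomogZeroDivisors 𝒜)
    (K' : AddSubgroup K) (hassoc : KAssociated 𝒜 K')
    (f : R) (hf : VHomog 𝒜 K' f) :
    VPrime 𝒜 K' f ↔ KPrime 𝒜 f := by
  constructor
  · rintro ⟨h0, hu, _, hp⟩
    refine ⟨h0, mt (isUnitIn_veronese_iff 𝒜 hf).2 hu, hf.homog_s9, fun g h hg hh hdvd => ?_⟩
    obtain ⟨r, hr, hrg⟩ := hassoc.exists_vhomog hg
    obtain ⟨s, hs, hsh⟩ := hassoc.exists_vhomog hh
    rw [← (hrg.mul_mul hsh).dvd_iff_dvd_right, ← dvdIn_veronese_iff 𝒜 hf (hr.mul hs)] at hdvd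
    rw [← hrg.dvd_iff_dvd_right, ← hsh.dvd_iff_dvd_right, ← dvdIn_veronese_iff 𝒜 hf hr,
      ← dvdIn_veronese_iff 𝒜 hf hs]
    exact hp r s hr hs hdvd
  · rintro ⟨h0, hu, _, hp⟩
    refine ⟨h0, mt (isUnitIn_veronese_iff 𝒜 hf).1 hu, hf, fun g h hg hh hdvd => ?_⟩
    rw [dvdIn_veronese_iff 𝒜 hf (hg.mul hh)] at hdvd
    rw [dvdIn_veronese_iff 𝒜 hf hg, dvdIn_veronese_iff 𝒜 hf hh]
    exact hp g h hg.homog_s9 hh.homog_s9 hdvd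
end

section
/- Let K be an abelian group, R a commutative K-graded ring without K-homogeneous zero divisors, and let R[T] carry the K-grading extending that of R obtained by assigning to T a degree w ∈ K (so the degree-d part of R[T] is spanned by the monomials a·T^n with a ∈ R_{d − n·w}). Then a nonzero K-homogeneous non-unit p ∈ R is K-prime in R if and only if the constant polynomial p is K-prime in R[T]. -/
lemma homog_C {K R : Type*} [AddCommGroup K] [CommRing R] {𝒜 : K → AddSubgroup R} (w : K)
    {a : R} (ha : Homog 𝒜 a) : Homog (polyGrading 𝒜 w) (Polynomial.C a) := by
  obtain ⟨d, hd⟩ := ha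
  refine ⟨d, fun n => ?_⟩
  rcases Nat.eq_zero_or_pos n with rfl | hn
  · simpa using hd
  · rw [Polynomial.coeff_C_of_ne_zero hn.ne']
    exact zero_mem _

/-- The graded analogue of Gauss's lemma for constants. The coefficients of a homogeneous
polynomial are homogeneous, so `K`-primality of `p` applies to products of coefficients. -/
lemma KPrime.C_dvd_or_dvd {K R : Type*} [AddCommGroup K] [CommRing R]
    {𝒜 : K → AddSubgroup R} {w : K} {p : R} (hp : KPrime 𝒜 p) {g h : Polynomial R}
    (hg : Homog (polyGrading 𝒜 w) g) (hh : Homog (polyGrading 𝒜 w) h)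
    (hdvd : Polynomial.C p ∣ g * h) : Polynomial.C p ∣ g ∨ Polynomial.C p ∣ h := by
  classical
  obtain ⟨d, hd⟩ := hg
  obtain ⟨e, he⟩ := hh
  simp only [Polynomial.C_dvd_iff_dvd_coeff] at hdvd ⊢
  by_contra! hcon
  obtain ⟨hg', hh'⟩ := hcon
  set i := Nat.find hg'
  set j := Nat.find hh'
  have hi : ¬ p ∣ g.coeff i := Nat.find_spec hg'
  have hj : ¬ p ∣ h.coeff j := Nat.find_spec hh'
  have hi_lt : ∀ k < i, p ∣ g.coeff k := fun k hk => not_not.mp (Nat.find_min hg' hk)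
  have hj_lt : ∀ k < j, p ∣ h.coeff k := fun k hk => not_not.mp (Nat.find_min hh' hk)
  have hsum := hdvd (i + j)
  have hmem : (i, j) ∈ Finset.HasAntidiagonal.antidiagonal (i + j) := by simp
  rw [Polynomial.coeff_mul, ← Finset.add_sum_erase _ _ hmem] at hsum
  -- Every other pair of indices summing to `i + j` has first entry below `i` or second below `j`.
  have hrest : p ∣ ∑ x ∈ (Finset.HasAntidiagonal.antidiagonal (i + j)).erase (i, j),
      g.coeff x.1 * h.coeff x.2 := by
    refine Finset.dvd_sum fun x hx => ?_
    obtain ⟨a, b⟩ := x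
    simp only [Finset.mem_erase, Finset.HasAntidiagonal.mem_antidiagonal, ne_eq, Prod.mk.injEq] at hx
    by_cases ha : a < i
    · exact (hi_lt a ha).mul_right _
    · exact (hj_lt b (by omega)).mul_left _
  have hprod : p ∣ g.coeff i * h.coeff j := (dvd_add_left hrest).mp hsum
  exact (hp.2.2.2 _ _ ⟨_, hd i⟩ ⟨_, he j⟩ hprod).elim hi hj

/-- Lemma 3.1. Let `R` be `K`-graded without homogeneous zero divisors
and grade `R[T]` by assigning to `T` the degree `w`. A nonzero homogeneous non-unit
`p ∈ R` is `K`-prime in `R` iff the constant polynomial `p` is `K`-prime in `R[T]`. -/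
theorem statement_11 {K R : Type*} [AddCommGroup K] [DecidableEq K] [CommRing R]
    (𝒜 : K → AddSubgroup R) [GradedRing 𝒜]
    (hzd : NoHomogZeroDivisors 𝒜) (w : K)
    (p : R) (hp0 : p ≠ 0) (hph : Homog 𝒜 p) (hpu : ¬IsUnit p) :
    KPrime 𝒜 p ↔ KPrime (polyGrading 𝒜 w) (Polynomial.C p) := by
  constructor
  · intro hp
    exact ⟨by simpa using hp0, by simpa using hpu, homog_C w hph,
      fun g h hg hh hdvd => hp.C_dvd_or_dvd hg hh hdvd⟩
  · rintro ⟨-, -, -, hP⟩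
    refine ⟨hp0, hpu, hph, fun g h hg hh hdvd => ?_⟩
    -- Taking the coefficient of `T ^ 0` turns divisibility of constants in `R[T]` into `R`.
    have hC : ∀ a : R, Polynomial.C p ∣ Polynomial.C a → p ∣ a := fun a ha => by
      simpa using (Polynomial.C_dvd_iff_dvd_coeff p _).mp ha 0
    have hmul : Polynomial.C p ∣ Polynomial.C g * Polynomial.C h := by
      rw [← Polynomial.C_mul]
      exact map_dvd Polynomial.C hdvd
    exact (hP _ _ (homog_C w hg) (homog_C w hh) hmul).imp (hC g) (hC h)
end

section
/- Let K be an abelian group, R a commutative K-graded ring without K-homogeneous zero divisors, and let R[T] carry the K-grading extending that of R obtained by assigning to T a degree w ∈ K (so the degree-d part of R[T] is spanned by the monomials a·T^n with a ∈ R_{d − n·w}). Then R[T] has no K-homogeneous zero divisors: the product of any two nonzero K-homogeneous polynomials in R[T] is nonzero. Moreover, every K-homogeneous polynomial in R[T] has only K-homogeneous coefficients, and the leading coefficient of a product of two nonzero K-homogeneous polynomials is the product of their leading coefficients. -/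
/-- Let `R` be `K`-graded without homogeneous zero divisors and grade
`R[T]` by assigning to `T` the degree `w`. Then `R[T]` has no homogeneous zero divisors;
moreover every homogeneous polynomial has only homogeneous coefficients, and the leading
coefficient of a product of two nonzero homogeneous polynomials is the product of their
leading coefficients. -/
theorem statement_12 {K R : Type*} [AddCommGroup K] [DecidableEq K] [CommRing R]
    (𝒜 : K → AddSubgroup R) [GradedRing 𝒜]
    (hzd : NoHomogZeroDivisors 𝒜) (w : K) :
    NoHomogZeroDivisors (polyGrading 𝒜 w) ∧
    (∀ f : Polynomial R, Homog (polyGrading 𝒜 w) f → ∀ n : ℕ, Homog 𝒜 (f.coeff n)) ∧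
    (∀ f g : Polynomial R, Homog (polyGrading 𝒜 w) f → Homog (polyGrading 𝒜 w) g →
      f ≠ 0 → g ≠ 0 →
        (f * g).leadingCoeff = f.leadingCoeff * g.leadingCoeff) := by
  have hcoeff : ∀ f : Polynomial R, Homog (polyGrading 𝒜 w) f →
      ∀ n : ℕ, Homog 𝒜 (f.coeff n) :=
    fun f ⟨d, hd⟩ n => ⟨d - n • w, hd n⟩
  have hlead : ∀ f g : Polynomial R, Homog (polyGrading 𝒜 w) f →
      Homog (polyGrading 𝒜 w) g → f ≠ 0 → g ≠ 0 →
      f.leadingCoeff * g.leadingCoeff ≠ 0 :=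
    fun f g hf hg hf0 hg0 =>
      hzd _ _ (hcoeff f hf f.natDegree) (hcoeff g hg g.natDegree)
        (Polynomial.leadingCoeff_ne_zero.mpr hf0) (Polynomial.leadingCoeff_ne_zero.mpr hg0)
  refine ⟨fun f g hf hg hf0 hg0 hfg => ?_, hcoeff, fun f g hf hg hf0 hg0 =>
    Polynomial.leadingCoeff_mul' (hlead f g hf hg hf0 hg0)⟩
  apply hlead f g hf hg hf0 hg0
  rw [← Polynomial.leadingCoeff_mul' (hlead f g hf hg hf0 hg0), hfg,
    Polynomial.leadingCoeff_zero]
end
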